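/- Let p, q ∈ [0,1] and let ρ be any 4×4 complex matrix with trace 1. Then the probability of heralding the |−⟩ outcome on the control qubit of the quantum switch equals pq; that is, Tr[ (I₄ ⊗ |−⟩⟨−|) · S(ρ) ] = p·q, where S(ρ) = Σ_{i,j∈{1,2}} W_{ij} (ρ ⊗ |+⟩⟨+|) W_{ij}† and I₄ is the 4×4 identity. -/

import Mathlib

open Matrix Kronecker Complex

noncomputable section

def PX : Matrix (Fin 2) (Fin 2) ℂ := !![0, 1; 1, 0]
def PZ : Matrix (Fin 2) (Fin 2) ℂ := !![1, 0; 0, -1]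
def I2 : Matrix (Fin 2) (Fin 2) ℂ := 1

def ket0 : Fin 2 → ℂ := ![1, 0]
def ket1 : Fin 2 → ℂ := ![0, 1]
def ketPlus : Fin 2 → ℂ := ((Real.sqrt 2 : ℂ))⁻¹ • (ket0 + ket1)
def ketMinus : Fin 2 → ℂ := ((Real.sqrt 2 : ℂ))⁻¹ • (ket0 - ket1)

def proj (v : Fin 2 → ℂ) : Matrix (Fin 2) (Fin 2) ℂ := vecMulVec v (star v)

/-- Kronecker product, flattened to `Fin (m*n)` indices (row-major). -/
def kron {m n : ℕ} (A : Matrix (Fin m) (Fin m) ℂ) (B : Matrix (Fin n) (Fin n) ℂ) :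
    Matrix (Fin (m * n)) (Fin (m * n)) ℂ :=
  Matrix.reindex finProdFinEquiv finProdFinEquiv (A ⊗ₖ B)

/-- Bit-flip channel Kraus operators: D₁ = √(1-p)·I₂, D₂ = √p·X. -/
def Dk (p : ℝ) : Fin 2 → Matrix (Fin 2) (Fin 2) ℂ :=
  ![(Real.sqrt (1 - p) : ℂ) • I2, (Real.sqrt p : ℂ) • PX]

/-- Phase-flip channel Kraus operators: E₁ = √(1-q)·I₂, E₂ = √q·Z. -/
def Ek (q : ℝ) : Fin 2 → Matrix (Fin 2) (Fin 2) ℂ :=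
  ![(Real.sqrt (1 - q) : ℂ) • I2, (Real.sqrt q : ℂ) • PZ]

/-- Quantum-switch Kraus operators W_{ij} = I₂ ⊗ (DᵢEⱼ ⊗ |0⟩⟨0| + EⱼDᵢ ⊗ |1⟩⟨1|). -/
def W (p q : ℝ) (i j : Fin 2) : Matrix (Fin 8) (Fin 8) ℂ :=
  kron I2 (kron (Dk p i * Ek q j) (proj ket0) + kron (Ek q j * Dk p i) (proj ket1))

/-- Quantum-switch output S(ρ) = Σᵢⱼ W_{ij} (ρ ⊗ |+⟩⟨+|) W_{ij}†. -/
def Sout (p q : ℝ) (ρ : Matrix (Fin 4) (Fin 4) ℂ) : Matrix (Fin 8) (Fin 8) ℂ :=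
  ∑ i : Fin 2, ∑ j : Fin 2, W p q i j * kron ρ (proj ketPlus) * (W p q i j)ᴴ

/-- Contraction of the control-qubit factor of an 8×8 matrix with a vector v:
(I₄ ⊗ ⟨v|) M (I₄ ⊗ |v⟩). -/
def contractCtrl (M : Matrix (Fin 8) (Fin 8) ℂ) (v : Fin 2 → ℂ) :
    Matrix (Fin 4) (Fin 4) ℂ :=
  Matrix.of fun a b => ∑ i : Fin 2, ∑ j : Fin 2,
    star (v i) * M (finProdFinEquiv (a, i)) (finProdFinEquiv (b, j)) * v j

/-! The amplitudes `⟨−|0⟩⟨0|+⟩ = 1/2` and `⟨−|1⟩⟨1|+⟩ = -1/2` differ only in sign, so preparing the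
control in `|+⟩` and finding it in `|−⟩` turns the switch of Kraus operators `A` and `B` into the
operator `(AB - BA)/2` on the system. For the bit-flip and phase-flip channels every commutator
involving a multiple of the identity vanishes. Since `X` and `Z` anticommute, the remaining one is
`2√(pq) XZ` with `XZ` unitary, which yields the trace `(1/4) * 4pq * Tr ρ`. -/

section Kronecker

variable {l m n : ℕ}

lemma finProdFinEquiv_assoc (a : Fin l) (b : Fin m) (c : Fin n) :
    Fin.cast (mul_assoc l m n) (finProdFinEquiv (finProdFinEquiv (a, b), c)) =
      finProdFinEquiv (a, finProdFinEquiv (b, c)) := by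
  ext
  simp only [Fin.val_cast, finProdFinEquiv_apply_val]
  ring

lemma kron_apply (A : Matrix (Fin m) (Fin m) ℂ) (B : Matrix (Fin n) (Fin n) ℂ)
    (x y : Fin m × Fin n) :
    kron A B (finProdFinEquiv x) (finProdFinEquiv y) = A x.1 y.1 * B x.2 y.2 := by
  simp only [kron, reindex_apply, submatrix_apply, Equiv.symm_apply_apply, kroneckerMap_apply]

lemma kron_assoc (A : Matrix (Fin l) (Fin l) ℂ) (B : Matrix (Fin m) (Fin m) ℂ)
    (C : Matrix (Fin n) (Fin n) ℂ) :
    (kron A (kron B C)).submatrix (Fin.cast (mul_assoc l m n)) (Fin.cast (mul_assoc l m n)) =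
      kron (kron A B) C := by
  ext x y
  obtain ⟨⟨ab, c⟩, rfl⟩ := finProdFinEquiv.surjective x
  obtain ⟨⟨ab', c'⟩, rfl⟩ := finProdFinEquiv.surjective y
  obtain ⟨⟨a, b⟩, rfl⟩ := finProdFinEquiv.surjective ab
  obtain ⟨⟨a', b'⟩, rfl⟩ := finProdFinEquiv.surjective ab'
  simp only [submatrix_apply, finProdFinEquiv_assoc, kron_apply, mul_assoc]

lemma kron_mul_kron (A A' : Matrix (Fin m) (Fin m) ℂ) (B B' : Matrix (Fin n) (Fin n) ℂ) :
    kron A B * kron A' B' = kron (A * A') (B * B') := by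
  simp only [kron, reindex_apply, submatrix_mul_equiv, mul_kronecker_mul]

lemma trace_kron (A : Matrix (Fin m) (Fin m) ℂ) (B : Matrix (Fin n) (Fin n) ℂ) :
    (kron A B).trace = A.trace * B.trace := by
  rw [← trace_kronecker]
  exact Equiv.sum_comp finProdFinEquiv.symm fun x => (A ⊗ₖ B) x x

lemma conjTranspose_kron (A : Matrix (Fin m) (Fin m) ℂ) (B : Matrix (Fin n) (Fin n) ℂ) :
    (kron A B)ᴴ = kron Aᴴ Bᴴ := by
  simp only [kron, conjTranspose_reindex, conjTranspose_kronecker]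

lemma kron_add (A : Matrix (Fin m) (Fin m) ℂ) (B B' : Matrix (Fin n) (Fin n) ℂ) :
    kron A (B + B') = kron A B + kron A B' := by
  simp only [kron, kronecker_add, reindex_apply, submatrix_add, Pi.add_apply]

lemma kron_sub (A : Matrix (Fin m) (Fin m) ℂ) (B B' : Matrix (Fin n) (Fin n) ℂ) :
    kron A (B - B') = kron A B - kron A B' := by
  rw [eq_sub_iff_add_eq, ← kron_add, sub_add_cancel]

lemma kron_smul (c : ℂ) (A : Matrix (Fin m) (Fin m) ℂ) (B : Matrix (Fin n) (Fin n) ℂ) :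
    kron A (c • B) = c • kron A B := by
  simp only [kron, kronecker_smul, reindex_apply, submatrix_smul, Pi.smul_apply]

lemma kron_zero (A : Matrix (Fin m) (Fin m) ℂ) :
    kron A (0 : Matrix (Fin n) (Fin n) ℂ) = 0 := by
  simp only [kron, kronecker_zero, reindex_apply, submatrix_zero, Pi.zero_apply]

lemma kron_one_one : kron (1 : Matrix (Fin m) (Fin m) ℂ) (1 : Matrix (Fin n) (Fin n) ℂ) = 1 := by
  simp only [kron, one_kronecker_one, reindex_apply, submatrix_one_equiv]

lemma one_kron_lie (B B' : Matrix (Fin n) (Fin n) ℂ) :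
    ⁅kron (1 : Matrix (Fin m) (Fin m) ℂ) B, kron (1 : Matrix (Fin m) (Fin m) ℂ) B'⁆ =
      kron (1 : Matrix (Fin m) (Fin m) ℂ) ⁅B, B'⁆ := by
  simp only [Ring.lie_def, kron_mul_kron, kron_sub, one_mul]

lemma kron_mem_unitaryGroup {U : Matrix (Fin m) (Fin m) ℂ} {V : Matrix (Fin n) (Fin n) ℂ}
    (hU : U ∈ unitaryGroup (Fin m) ℂ) (hV : V ∈ unitaryGroup (Fin n) ℂ) :
    kron U V ∈ unitaryGroup (Fin (m * n)) ℂ := by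
  rw [mem_unitaryGroup_iff, star_eq_conjTranspose] at hU hV ⊢
  rw [conjTranspose_kron, kron_mul_kron, hU, hV, kron_one_one]

end Kronecker

section Trace

lemma trace_proj_mul_conj (u v : Fin 2 → ℂ) (C D : Matrix (Fin 2) (Fin 2) ℂ) :
    (proj v * (C * proj u * Dᴴ)).trace =
      (star v ⬝ᵥ C *ᵥ u) * star (star v ⬝ᵥ D *ᵥ u) := by
  rw [proj, proj, mul_vecMulVec, vecMulVec_mul (C *ᵥ u), ← star_mulVec, vecMulVec_mul_vecMulVec,
    trace_vecMulVec, dotProduct_smul, smul_eq_mul, dotProduct_star v, dotProduct_comm (D *ᵥ u)]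

lemma trace_conj_smul_unitary {ι R : Type*} [Fintype ι] [DecidableEq ι] [CommRing R] [StarRing R]
    {U : Matrix ι ι R} (hU : U ∈ unitaryGroup ι R) (c : R) (ρ : Matrix ι ι R) :
    ((c • U) * ρ * (c • U)ᴴ).trace = c * star c * ρ.trace := by
  have hU' : Uᴴ * U = 1 := mem_unitaryGroup_iff'.mp hU
  rw [trace_mul_cycle, conjTranspose_smul, smul_mul_smul_comm, hU', smul_one_mul, trace_smul,
    smul_eq_mul, mul_comm (star c)]

end Trace

section Switch

variable {n : ℕ}

/-- Kraus operator of the quantum switch of two operations with Kraus operators `A` and `B` on an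
`n`-dimensional system: the second tensor factor is the control qubit, which selects the order. -/
def switchKraus (A B : Matrix (Fin n) (Fin n) ℂ) : Matrix (Fin (n * 2)) (Fin (n * 2)) ℂ :=
  kron (A * B) (proj ket0) + kron (B * A) (proj ket1)

lemma W_eq_switchKraus (p q : ℝ) (i j : Fin 2) :
    W p q i j = switchKraus (kron I2 (Dk p i)) (kron I2 (Ek q j)) := by
  rw [switchKraus, kron_mul_kron, kron_mul_kron, I2, one_mul, ← kron_assoc, ← kron_assoc]
  -- At these sizes the casts of `kron_assoc` are definitionally the identity of `Fin 8`.
  exact kron_add _ _ _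

lemma dotProduct_proj_mulVec (u v w : Fin 2 → ℂ) :
    star v ⬝ᵥ proj w *ᵥ u = (star v ⬝ᵥ w) * (star w ⬝ᵥ u) := by
  rw [proj, vecMulVec_mulVec, dotProduct_smul, op_smul_eq_mul]

lemma inv_sqrt_two_mul_self : (√2 : ℂ)⁻¹ * (√2 : ℂ)⁻¹ = 1 / 2 := by
  rw [← mul_inv, ← ofReal_mul, Real.mul_self_sqrt zero_le_two, ofReal_ofNat, one_div]

lemma ketMinus_dotProduct_proj_ket0_mulVec_ketPlus :
    star ketMinus ⬝ᵥ proj ket0 *ᵥ ketPlus = 1 / 2 := by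
  rw [dotProduct_proj_mulVec]
  simp [ketMinus, ketPlus, ket0, ket1, dotProduct, inv_sqrt_two_mul_self]

lemma ketMinus_dotProduct_proj_ket1_mulVec_ketPlus :
    star ketMinus ⬝ᵥ proj ket1 *ᵥ ketPlus = -(1 / 2) := by
  rw [dotProduct_proj_mulVec]
  simp [ketMinus, ketPlus, ket0, ket1, dotProduct, inv_sqrt_two_mul_self]

lemma trace_ketMinus_switchKraus (A B ρ : Matrix (Fin n) (Fin n) ℂ) :
    (kron 1 (proj ketMinus) *
        (switchKraus A B * kron ρ (proj ketPlus) * (switchKraus A B)ᴴ)).trace =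
      1 / 4 * (⁅A, B⁆ * ρ * ⁅A, B⁆ᴴ).trace := by
  simp only [switchKraus, Ring.lie_def, conjTranspose_add, conjTranspose_sub, conjTranspose_kron,
    add_mul, mul_add, sub_mul, mul_sub, kron_mul_kron, one_mul, trace_add, trace_sub, trace_kron,
    trace_proj_mul_conj, ketMinus_dotProduct_proj_ket0_mulVec_ketPlus,
    ketMinus_dotProduct_proj_ket1_mulVec_ketPlus]
  simp only [star_neg, star_div₀, star_one, star_ofNat]
  ring

end Switch

section Pauli

lemma PX_mem_unitaryGroup : PX ∈ unitaryGroup (Fin 2) ℂ := by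
  rw [mem_unitaryGroup_iff, star_eq_conjTranspose]
  ext i j
  fin_cases i <;> fin_cases j <;> simp [PX, mul_apply]

lemma PZ_mem_unitaryGroup : PZ ∈ unitaryGroup (Fin 2) ℂ := by
  rw [mem_unitaryGroup_iff, star_eq_conjTranspose]
  ext i j
  fin_cases i <;> fin_cases j <;> simp [PZ, mul_apply]

lemma PZ_mul_PX : PZ * PX = -(PX * PZ) := by
  simp [PX, PZ]

lemma lie_PX_PZ : ⁅PX, PZ⁆ = (2 : ℂ) • (PX * PZ) := by
  rw [Ring.lie_def, PZ_mul_PX, sub_neg_eq_add, two_smul]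

lemma lie_Dk_zero (p : ℝ) (B : Matrix (Fin 2) (Fin 2) ℂ) : ⁅Dk p 0, B⁆ = 0 :=
  ((Commute.one_left B).smul_left _).lie_eq

lemma lie_Ek_zero (q : ℝ) (A : Matrix (Fin 2) (Fin 2) ℂ) : ⁅A, Ek q 0⁆ = 0 :=
  ((Commute.one_right A).smul_right _).lie_eq

lemma lie_Dk_one_Ek_one (p q : ℝ) :
    ⁅Dk p 1, Ek q 1⁆ = (√p * √q * 2 : ℂ) • (PX * PZ) := by
  change ⁅(√p : ℂ) • PX, (√q : ℂ) • PZ⁆ = _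
  rw [Ring.lie_def, smul_mul_smul_comm, smul_mul_smul_comm, mul_comm (√q : ℂ), ← smul_sub,
    ← Ring.lie_def, lie_PX_PZ, smul_smul]

end Pauli

lemma trace_ketMinus_W (p q : ℝ) (i j : Fin 2) (ρ : Matrix (Fin 4) (Fin 4) ℂ) :
    (kron (1 : Matrix (Fin 4) (Fin 4) ℂ) (proj ketMinus) *
        (W p q i j * kron ρ (proj ketPlus) * (W p q i j)ᴴ)).trace =
      1 / 4 * (kron I2 ⁅Dk p i, Ek q j⁆ * ρ * (kron I2 ⁅Dk p i, Ek q j⁆)ᴴ).trace := by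
  have hlie : kron I2 ⁅Dk p i, Ek q j⁆ = ⁅kron I2 (Dk p i), kron I2 (Ek q j)⁆ :=
    (one_kron_lie _ _).symm
  rw [W_eq_switchKraus, hlie]
  exact trace_ketMinus_switchKraus _ _ ρ

lemma trace_ketMinus_Sout (p q : ℝ) (ρ : Matrix (Fin 4) (Fin 4) ℂ) :
    (kron (1 : Matrix (Fin 4) (Fin 4) ℂ) (proj ketMinus) * Sout p q ρ).trace =
      1 / 4 * ∑ i : Fin 2, ∑ j : Fin 2,
        (kron I2 ⁅Dk p i, Ek q j⁆ * ρ * (kron I2 ⁅Dk p i, Ek q j⁆)ᴴ).trace := by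
  simp only [Sout, Finset.mul_sum, trace_sum]
  exact Finset.sum_congr rfl fun i _ => Finset.sum_congr rfl fun j _ => trace_ketMinus_W p q i j ρ

lemma trace_conj_lie_Dk_one_Ek_one {p q : ℝ} (hp : 0 ≤ p) (hq : 0 ≤ q)
    (ρ : Matrix (Fin 4) (Fin 4) ℂ) :
    (kron I2 ⁅Dk p 1, Ek q 1⁆ * ρ * (kron I2 ⁅Dk p 1, Ek q 1⁆)ᴴ).trace =
      4 * (p * q : ℝ) * ρ.trace := by
  have hU : kron I2 (PX * PZ) ∈ unitaryGroup (Fin (2 * 2)) ℂ :=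
    kron_mem_unitaryGroup (one_mem _) (mul_mem PX_mem_unitaryGroup PZ_mem_unitaryGroup)
  have hc : (√p * √q * 2 : ℂ) * star (√p * √q * 2 : ℂ) = 4 * (p * q : ℝ) := by
    have hp' : (√p * √p : ℂ) = p := by rw [← ofReal_mul, Real.mul_self_sqrt hp]
    have hq' : (√q * √q : ℂ) = q := by rw [← ofReal_mul, Real.mul_self_sqrt hq]
    simp only [star_def, map_mul, conj_ofReal, Complex.conj_ofNat]
    rw [ofReal_mul, ← hp', ← hq']
    ring
  rw [lie_Dk_one_Ek_one, kron_smul, ← hc]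
  exact trace_conj_smul_unitary hU _ ρ

theorem heralding_probability_general {p q : ℝ} (hp : 0 ≤ p) (hq : 0 ≤ q)
    (ρ : Matrix (Fin 4) (Fin 4) ℂ) :
    (kron (1 : Matrix (Fin 4) (Fin 4) ℂ) (proj ketMinus) * Sout p q ρ).trace =
      (p * q : ℝ) * ρ.trace := by
  rw [trace_ketMinus_Sout]
  simp only [Fin.sum_univ_two, lie_Dk_zero, lie_Ek_zero, kron_zero, Matrix.zero_mul, trace_zero,
    trace_conj_lie_Dk_one_Ek_one hp hq]
  ring

theorem heralding_probability (p q : ℝ) (hp : p ∈ Set.Icc (0 : ℝ) 1)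
    (hq : q ∈ Set.Icc (0 : ℝ) 1) (ρ : Matrix (Fin 4) (Fin 4) ℂ)
    (hρ : ρ.trace = 1) :
    (kron (1 : Matrix (Fin 4) (Fin 4) ℂ) (proj ketMinus) * Sout p q ρ).trace = (p * q : ℝ) := by
  rw [heralding_probability_general hp.1 hq.1, hρ, mul_one]

end
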